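/- arXiv:2408.05424 — 2 statements merged into one kernel-verified Lean document; each statement's English description precedes it below -/
import Mathlib

section
/- Let G be a finite simple graph with m edges, maximum degree Δ ≥ 2 and minimum degree δ, and let ℓ be the number of edges v_i v_j of G with degree pair {d_i, d_j} = {Δ, δ}. Then ISDD(G) ≥ (Δ·δ/(Δ² + δ²))·ℓ + ((Δ−1)·δ/((Δ−1)² + δ²))·(m − ℓ). -/
/-- The inverse symmetric division deg index
`ISDD(G) = Σ_{v_i v_j ∈ E(G)} d_i·d_j/(d_i² + d_j²)`. -/
noncomputable def ISDD {V : Type*} [Fintype V] [DecidableEq V] (G : SimpleGraph V)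
    [DecidableRel G.Adj] : ℝ :=
  ∑ e ∈ G.edgeFinset,
    Sym2.lift ⟨fun i j => ((G.degree i : ℝ) * (G.degree j : ℝ)) /
      ((G.degree i : ℝ) ^ 2 + (G.degree j : ℝ) ^ 2), by intro a b; ring⟩ e

/-! The weight `ab/(a² + b²)` depends only on the ratio of the larger to the smaller of `a` and `b`,
and it decreases in that ratio. If `δ > 0`, a degree pair other than `{Δ, δ}` has ratio at most
`(Δ - 1)/δ` or at most `Δ/(δ + 1)`, and the latter is no larger since `δ ≤ Δ - 1`. The inequalities
between ratios are stated cross-multiplied, so that they also cover `δ = 0`. -/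

section OrderedAlgebra

open Finset

theorem mul_div_sq_add_sq_le_mul_div_sq_add_sq {K : Type*} [Field K] [LinearOrder K]
    [IsStrictOrderedRing K] {a b c d : K} (ha : a ≠ 0) (hc : c ≠ 0)
    (hab : d * a ≤ c * b) (hba : d * b ≤ c * a) :
    c * d / (c ^ 2 + d ^ 2) ≤ a * b / (a ^ 2 + b ^ 2) := by
  have factorization :
      a * b * (c ^ 2 + d ^ 2) - c * d * (a ^ 2 + b ^ 2) = (c * b - d * a) * (c * a - d * b) := by
    ring
  rw [div_le_div_iff₀ (by positivity) (by positivity), ← sub_nonneg, factorization]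
  exact mul_nonneg (sub_nonneg.2 hab) (sub_nonneg.2 hba)

theorem mul_card_filter_add_mul_le_sum {ι R : Type*} [Ring R] [PartialOrder R]
    [IsOrderedAddMonoid R] {s : Finset ι} {p : ι → Prop} [DecidablePred p] {f : ι → R} {x y : R}
    (hx : ∀ i ∈ s, p i → x ≤ f i) (hy : ∀ i ∈ s, ¬ p i → y ≤ f i) :
    x * #(s.filter p) + y * (#s - #(s.filter p)) ≤ ∑ i ∈ s, f i := by
  have card_not : (#s : R) - #(s.filter p) = #(s.filter (¬ p ·)) := by
    rw [← card_filter_add_card_filter_not (s := s) p, Nat.cast_add, add_sub_cancel_left]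
  rw [card_not, ← nsmul_eq_mul', ← nsmul_eq_mul', ← sum_filter_add_sum_filter_not s p f]
  gcongr
  · exact card_nsmul_le_sum _ _ _ fun i hi ↦ hx i (mem_filter.1 hi).1 (mem_filter.1 hi).2
  · exact card_nsmul_le_sum _ _ _ fun i hi ↦ hy i (mem_filter.1 hi).1 (mem_filter.1 hi).2

theorem mul_le_mul_of_le_succ_of_le_or_lt {a b D d : ℕ} (hd : d ≤ D) (ha : a ≤ D + 1) (hb : d ≤ b)
    (h : a ≤ D ∨ d < b) : d * a ≤ D * b := by
  rcases h with haD | hdb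
  · calc d * a ≤ b * D := Nat.mul_le_mul hb haD
      _ = D * b := mul_comm b D
  · calc d * a ≤ d * (D + 1) := Nat.mul_le_mul_left d ha
      _ = D * d + d := by ring
      _ ≤ D * d + D := Nat.add_le_add_left hd _
      _ = D * (d + 1) := by ring
      _ ≤ D * b := Nat.mul_le_mul_left D hdb

end OrderedAlgebra

/-- The contribution `ab/(a² + b²)` to `ISDD` of an edge with degree pair `{a, b}`, as a function
of the unordered pair. -/
noncomputable def isddWeight : Sym2 ℕ → ℝ :=
  Sym2.lift ⟨fun a b ↦ (a : ℝ) * b / ((a : ℝ) ^ 2 + (b : ℝ) ^ 2), fun a b ↦ by ring⟩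

theorem isddWeight_mk (a b : ℕ) :
    isddWeight s(a, b) = (a : ℝ) * b / ((a : ℝ) ^ 2 + (b : ℝ) ^ 2) := rfl

theorem isddWeight_le_of_ne {a b D d : ℕ} (hD : D ≠ 0) (ha₀ : a ≠ 0)
    (ha : a ∈ Set.Icc d (D + 1)) (hb : b ∈ Set.Icc d (D + 1)) (hne : s(a, b) ≠ s(D + 1, d)) :
    isddWeight s(D, d) ≤ isddWeight s(a, b) := by
  obtain ⟨hda, haD⟩ := ha
  obtain ⟨hdb, hbD⟩ := hb
  rw [Ne, Sym2.eq_iff] at hne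
  have hdD : d ≤ D := by omega
  have hab : d * a ≤ D * b := mul_le_mul_of_le_succ_of_le_or_lt hdD haD hdb (by omega)
  have hba : d * b ≤ D * a := mul_le_mul_of_le_succ_of_le_or_lt hdD hbD hda (by omega)
  rw [isddWeight_mk, isddWeight_mk]
  exact mul_div_sq_add_sq_le_mul_div_sq_add_sq (mod_cast ha₀) (mod_cast hD)
    (mod_cast hab) (mod_cast hba)

section Graph

variable {V : Type*} [Fintype V] (G : SimpleGraph V) [DecidableRel G.Adj]

theorem ISDD_eq_sum_isddWeight [DecidableEq V] :
    ISDD G = ∑ e ∈ G.edgeFinset, isddWeight (e.map fun v ↦ G.degree v) :=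
  Finset.sum_congr rfl fun e _ ↦ e.ind fun _ _ ↦ rfl

variable {G}

theorem isddWeight_maxDegree_sub_one_le (hΔ : 2 ≤ G.maxDegree) {e : Sym2 V} (he : e ∈ G.edgeSet)
    (hne : e.map (fun v ↦ G.degree v) ≠ s(G.maxDegree, G.minDegree)) :
    isddWeight s(G.maxDegree - 1, G.minDegree) ≤ isddWeight (e.map fun v ↦ G.degree v) := by
  induction e with | _ u v
  have hΔ_succ : G.maxDegree - 1 + 1 = G.maxDegree := by omega
  have degree_mem (w : V) : G.degree w ∈ Set.Icc G.minDegree (G.maxDegree - 1 + 1) :=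
    ⟨G.minDegree_le_degree w, hΔ_succ ▸ G.degree_le_maxDegree w⟩
  have degree_ne_zero : G.degree u ≠ 0 := ((G.degree_pos_iff_exists_adj u).2 ⟨v, he⟩).ne'
  exact isddWeight_le_of_ne (by omega) degree_ne_zero (degree_mem u) (degree_mem v)
    (hΔ_succ.symm ▸ hne)

end Graph

/-- If `G` has `m` edges, maximum degree `Δ ≥ 2`, minimum degree `δ`,
and `ℓ` edges whose degree pair is `{Δ, δ}`, then
`ISDD(G) ≥ (Δδ/(Δ²+δ²))·ℓ + ((Δ−1)δ/((Δ−1)²+δ²))·(m − ℓ)`. -/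
theorem stmt_8 {V : Type*} [Fintype V] [DecidableEq V] (G : SimpleGraph V)
    [DecidableRel G.Adj] (hΔ : 2 ≤ G.maxDegree) (m ℓ : ℕ)
    (hm : m = G.edgeFinset.card)
    (hℓ : ℓ = (G.edgeFinset.filter
      (fun e => Sym2.map (fun v => G.degree v) e = s(G.maxDegree, G.minDegree))).card) :
    ISDD G ≥ ((G.maxDegree : ℝ) * (G.minDegree : ℝ)) /
        ((G.maxDegree : ℝ) ^ 2 + (G.minDegree : ℝ) ^ 2) * (ℓ : ℝ) +
      (((G.maxDegree : ℝ) - 1) * (G.minDegree : ℝ)) /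
        (((G.maxDegree : ℝ) - 1) ^ 2 + (G.minDegree : ℝ) ^ 2) * ((m : ℝ) - (ℓ : ℝ)) := by
  subst hm hℓ
  have bound := mul_card_filter_add_mul_le_sum (s := G.edgeFinset)
    (p := fun e ↦ e.map (fun v ↦ G.degree v) = s(G.maxDegree, G.minDegree))
    (fun _ _ heq ↦ (congrArg isddWeight heq).ge)
    (fun _ he hne ↦ isddWeight_maxDegree_sub_one_le hΔ (SimpleGraph.mem_edgeFinset.1 he) hne)
  rwa [← ISDD_eq_sum_isddWeight, isddWeight_mk, isddWeight_mk,
    Nat.cast_pred (by omega : 0 < G.maxDegree)] at bound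
end

section
/- Let G be a finite simple graph of order n with maximum degree Δ ≥ 2, and let k be the number of edges v_i v_j of G with d_i = d_j. Then ISDD(G) ≤ k/2 + (Δ·(Δ−1)/(Δ² + (Δ−1)²))·(n·Δ/2 − k). -/
/-!
The weight `a * b / (a ^ 2 + b ^ 2)` of an edge with end degrees `a ≤ b` depends only on the ratio
`a / b` and increases with it on `[0, 1]`. It is therefore at most `1 / 2`, and among distinct
degrees `a, b ≤ Δ` it is largest when the ratio is `(Δ - 1) / Δ`. Summing these two bounds over the
`k` edges with equal end degrees and the `m - k` others, and using `2 * m ≤ n * Δ`, gives the claim.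
-/

section InvSymmDiv

variable {K : Type*} [Field K]

/-- The inverse symmetric division `(a / b + b / a)⁻¹` of `a` and `b`, which is the contribution to
`ISDD` of an edge with end degrees `a` and `b`, written as a single fraction. It is `0 / 0 = 0` at
`a = b = 0`. -/
def invSymmDiv (a b : K) : K :=
  a * b / (a ^ 2 + b ^ 2)

lemma invSymmDiv_comm (a b : K) : invSymmDiv a b = invSymmDiv b a := by
  rw [invSymmDiv, invSymmDiv, mul_comm, add_comm]

variable [LinearOrder K] [IsStrictOrderedRing K] {a b c d : K}

lemma invSymmDiv_nonneg (ha : 0 ≤ a) (hb : 0 ≤ b) : 0 ≤ invSymmDiv a b := by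
  unfold invSymmDiv
  positivity

lemma invSymmDiv_le_half (a b : K) : invSymmDiv a b ≤ 1 / 2 := by
  refine div_le_of_le_mul₀ (by positivity) (by positivity) ?_
  linarith [two_mul_le_add_sq a b]

lemma invSymmDiv_le_of_div_le_div (hb : 0 < b) (hc : 0 ≤ c) (hd : 0 < d) (hcd : c ≤ d)
    (hratio : a / b ≤ c / d) : invSymmDiv a b ≤ invSymmDiv c d := by
  have had_le_cb : a * d ≤ c * b := (div_le_div_iff₀ hb hd).1 hratio
  have hab : a ≤ b := (div_le_one hb).1 (hratio.trans ((div_le_one hd).2 hcd))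
  have hac_le_bd : a * c ≤ b * d := mul_le_mul hab hcd hc hb.le
  have hfactor : c * d * (a ^ 2 + b ^ 2) - a * b * (c ^ 2 + d ^ 2) =
      (c * b - a * d) * (b * d - a * c) := by ring
  rw [invSymmDiv, invSymmDiv, div_le_div_iff₀ (by positivity) (by positivity), ← sub_nonneg,
    hfactor]
  exact mul_nonneg (sub_nonneg.2 had_le_cb) (sub_nonneg.2 hac_le_bd)

lemma invSymmDiv_le_of_add_one_le (ha : 0 ≤ a) (hab : a + 1 ≤ b) (hbd : b ≤ d) :
    invSymmDiv a b ≤ invSymmDiv (d - 1) d := by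
  have hb : 0 < b := by linarith
  have hd : 0 < d := hb.trans_le hbd
  refine invSymmDiv_le_of_div_le_div hb (by linarith) hd (by linarith) ?_
  calc a / b ≤ (b - 1) / b := by gcongr; linarith
    _ = 1 - 1 / b := by rw [sub_div, div_self hb.ne']
    _ ≤ 1 - 1 / d := by gcongr
    _ = (d - 1) / d := by rw [sub_div, div_self hd.ne']

lemma invSymmDiv_natCast_le_of_ne {p q D : ℕ} (hpq : p ≠ q) (hp : p ≤ D) (hq : q ≤ D) :
    invSymmDiv (p : K) q ≤ invSymmDiv (D : K) (D - 1) := by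
  wlog hlt : p < q generalizing p q
  · rw [invSymmDiv_comm]
    exact this hpq.symm hq hp (hpq.lt_or_gt.resolve_left hlt)
  rw [invSymmDiv_comm (D : K)]
  exact invSymmDiv_le_of_add_one_le p.cast_nonneg (mod_cast hlt) (mod_cast hq)

end InvSymmDiv

lemma sum_le_card_filter_mul_add {ι R : Type*} [Ring R] [PartialOrder R] [IsOrderedRing R]
    (s : Finset ι) (P : ι → Prop) [DecidablePred P] {f : ι → R} {A B : R}
    (hA : ∀ i ∈ s, P i → f i ≤ A) (hB : ∀ i ∈ s, ¬ P i → f i ≤ B) :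
    ∑ i ∈ s, f i ≤ (s.filter P).card * A + (s.card - (s.filter P).card) * B := by
  have hcard : ((s.filter P).card : R) + (s.filter (¬ P ·)).card = s.card := by
    rw [← Nat.cast_add, s.card_filter_add_card_filter_not P]
  calc ∑ i ∈ s, f i = ∑ i ∈ s with P i, f i + ∑ i ∈ s with ¬ P i, f i :=
        (Finset.sum_filter_add_sum_filter_not s P f).symm
    _ ≤ (s.filter P).card • A + (s.filter (¬ P ·)).card • B := by
        gcongr <;> refine Finset.sum_le_card_nsmul _ _ _ fun i hi ↦ ?_
        · exact hA i (Finset.mem_filter.1 hi).1 (Finset.mem_filter.1 hi).2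
        · exact hB i (Finset.mem_filter.1 hi).1 (Finset.mem_filter.1 hi).2
    _ = (s.filter P).card * A + (s.card - (s.filter P).card) * B := by
        rw [nsmul_eq_mul, nsmul_eq_mul, ← hcard, add_sub_cancel_left]

section Graph

variable {V : Type*} [Fintype V] (G : SimpleGraph V) [DecidableRel G.Adj] {D : ℕ}

/-- The edges of `G` whose two ends have equal degree, counted by `k` in the theorem. -/
def equalDegreeEdgeFinset : Finset (Sym2 V) :=
  G.edgeFinset.filter fun e ↦ (e.map fun v ↦ G.degree v).IsDiag

lemma two_mul_card_edgeFinset_le (hD : ∀ v, G.degree v ≤ D) :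
    2 * G.edgeFinset.card ≤ Fintype.card V * D := by
  rw [← G.sum_degrees_eq_twice_card_edges, ← smul_eq_mul]
  exact Finset.sum_le_card_nsmul _ _ _ fun v _ ↦ hD v

lemma ISDD_le_of_degree_le [DecidableEq V] (hD : ∀ v, G.degree v ≤ D) :
    ISDD G ≤ (equalDegreeEdgeFinset G).card * (1 / 2) +
      (G.edgeFinset.card - (equalDegreeEdgeFinset G).card) * invSymmDiv (D : ℝ) (D - 1) := by
  refine sum_le_card_filter_mul_add _ _ (fun e _ _ ↦ ?_) fun e _ hne ↦ ?_
  all_goals induction e with | _ v w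
  · exact invSymmDiv_le_half _ _
  · exact invSymmDiv_natCast_le_of_ne hne (hD v) (hD w)

end Graph

/-- If `G` has order `n`, maximum degree `Δ ≥ 2`, and `k` edges whose
endpoints have equal degrees, then
`ISDD(G) ≤ k/2 + (Δ·(Δ−1)/(Δ²+(Δ−1)²))·(n·Δ/2 − k)`. -/
theorem stmt_12 {V : Type*} [Fintype V] [DecidableEq V] (G : SimpleGraph V)
    [DecidableRel G.Adj] (hΔ : 2 ≤ G.maxDegree) (n k : ℕ)
    (hn : n = Fintype.card V)
    (hk : k = (G.edgeFinset.filter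
      (fun e => (Sym2.map (fun v => G.degree v) e).IsDiag)).card) :
    ISDD G ≤ (k : ℝ) / 2 +
      ((G.maxDegree : ℝ) * ((G.maxDegree : ℝ) - 1)) /
        ((G.maxDegree : ℝ) ^ 2 + ((G.maxDegree : ℝ) - 1) ^ 2) *
        ((n : ℝ) * (G.maxDegree : ℝ) / 2 - (k : ℝ)) := by
  have hΔ' : (2 : ℝ) ≤ G.maxDegree := mod_cast hΔ
  have hweight : 0 ≤ invSymmDiv (G.maxDegree : ℝ) (G.maxDegree - 1) :=
    invSymmDiv_nonneg (by linarith) (by linarith)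
  have hedges : (2 : ℝ) * G.edgeFinset.card ≤ n * G.maxDegree := by
    rw [hn]
    exact mod_cast two_mul_card_edgeFinset_le G G.degree_le_maxDegree
  calc ISDD G
      ≤ k * (1 / 2) +
          (G.edgeFinset.card - k) * invSymmDiv (G.maxDegree : ℝ) (G.maxDegree - 1) := by
        rw [hk]
        exact ISDD_le_of_degree_le G G.degree_le_maxDegree
    _ ≤ k * (1 / 2) +
          (n * G.maxDegree / 2 - k) * invSymmDiv (G.maxDegree : ℝ) (G.maxDegree - 1) := by
        gcongr
        linarith
    _ = _ := by rw [invSymmDiv]; ring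
end
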